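/- Let n = 2m. The Dirac spinor space 𝕊_{2m} = ⋀W_m, equipped with the module structure τ_{2m}(u + v̄) = √2 ε(u) − √2 ι(v̄), is a simple module over ℂCl(2m) of complex dimension 2^m; moreover, every simple ℂCl(2m)-module is isomorphic to 𝕊_{2m}, i.e. up to equivalence τ_{2m} is the unique irreducible representation of ℂCl(2m). -/

import Mathlib

set_option synthInstance.maxHeartbeats 1000000
set_option maxHeartbeats 1000000

noncomputable section

open Complex

/-- The quadratic form `Q(x) = -(x₁² + ⋯ + x_n²)` on `ℂⁿ`. -/
def Qc (n : ℕ) : QuadraticForm ℂ (Fin n → ℂ) :=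
  QuadraticMap.weightedSumSquares ℂ (fun _ : Fin n => (-1 : ℂ))

/-- The isotropic vector `f_j = (e_{2j-1} + i e_{2j})/√2` (0-indexed: coords `2j`, `2j+1`). -/
def fvec (n j : ℕ) : Fin n → ℂ := fun i =>
  if (i : ℕ) = 2 * j then ((Real.sqrt 2 : ℂ))⁻¹
  else if (i : ℕ) = 2 * j + 1 then Complex.I * ((Real.sqrt 2 : ℂ))⁻¹
  else 0

/-- The isotropic vector `f̄_j = -(e_{2j-1} - i e_{2j})/√2`. -/
def fbarvec (n j : ℕ) : Fin n → ℂ := fun i =>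
  if (i : ℕ) = 2 * j then -((Real.sqrt 2 : ℂ))⁻¹
  else if (i : ℕ) = 2 * j + 1 then Complex.I * ((Real.sqrt 2 : ℂ))⁻¹
  else 0

/-- The standard basis vector `e` with a `1` in (0-indexed) coordinate `j`. -/
def evec (n j : ℕ) : Fin n → ℂ := fun i => if (i : ℕ) = j then 1 else 0

/-- The maximal isotropic subspace `W = span(f₁, …, f_m)` of `ℂⁿ`. -/
def Wsub (n m : ℕ) : Submodule ℂ (Fin n → ℂ) :=
  Submodule.span ℂ (Set.range fun j : Fin m => fvec n j)

/-- `W̄ = span(f̄₁, …, f̄_m)`. -/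
def Wbarsub (n m : ℕ) : Submodule ℂ (Fin n → ℂ) :=
  Submodule.span ℂ (Set.range fun j : Fin m => fbarvec n j)

/-- The Dirac spinor space `𝕊 = ⋀ W`. -/
abbrev Spinor (n m : ℕ) := ExteriorAlgebra ℂ (Wsub n m)

/-- The bilinear extension `⟨v, ·⟩ = Σ_i v_i (·)_i` of the standard inner product,
as a linear functional. -/
def pairingLin (n : ℕ) (v : Fin n → ℂ) : (Fin n → ℂ) →ₗ[ℂ] ℂ :=
  ∑ i, v i • (LinearMap.proj i : (Fin n → ℂ) →ₗ[ℂ] ℂ)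

/-- Exterior multiplication `ε(u)` by `u ∈ W` on `⋀ W`. -/
def extMul (n m : ℕ) (u : Wsub n m) : Module.End ℂ (Spinor n m) :=
  LinearMap.mulLeft ℂ (ExteriorAlgebra.ι ℂ u)

/-- Interior multiplication (contraction) `ι(v̄)` on `⋀ W` by `v̄ ∈ ℂⁿ`, with respect to the
pairing `⟨v̄, u⟩`; it is the unique degree `-1` antiderivation with `ι(v̄) u = ⟨v̄, u⟩` on `W`. -/
def intMul (n m : ℕ) (v : Fin n → ℂ) : Module.End ℂ (Spinor n m) :=
  CliffordAlgebra.contractLeft (Q := (0 : QuadraticForm ℂ (Wsub n m)))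
    ((pairingLin n v).comp (Wsub n m).subtype)

/-- The parity operator `γ`, acting by `(-1)^k` on `⋀^k W`. -/
def parity (n m : ℕ) : Module.End ℂ (Spinor n m) :=
  (CliffordAlgebra.involute (Q := (0 : QuadraticForm ℂ (Wsub n m)))).toLinearMap

/-- `γ` as a linear equivalence (it is an involution). -/
def parityEquiv (n m : ℕ) : Spinor n m ≃ₗ[ℂ] Spinor n m :=
  LinearEquiv.ofInvolutive (parity n m) (fun x => CliffordAlgebra.involute_involute x)

/-- The even part `𝕊⁺ = ⋀^{even} W`. -/
def SpinorEven (n m : ℕ) : Submodule ℂ (Spinor n m) :=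
  CliffordAlgebra.evenOdd (0 : QuadraticForm ℂ (Wsub n m)) 0

/-- The odd part `𝕊⁻ = ⋀^{odd} W`. -/
def SpinorOdd (n m : ℕ) : Submodule ℂ (Spinor n m) :=
  CliffordAlgebra.evenOdd (0 : QuadraticForm ℂ (Wsub n m)) 1

/-!
A vector of `⋀W` killed by all contractions is a scalar: contractions by `d` measure the effect on
`⋀W → ⋀M` of changing a linear map `W → M` by a rank-one map `d ⊗ n`, so such a vector cannot
distinguish the identity of `W` from zero. On the other hand the vectors of `W̄` act on any
`ℂCl`-module by anticommuting operators of square zero, hence have a common kernel vector (a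
*vacuum*) in every nonzero invariant subspace. In `⋀W` the vacuum is the scalar `1`, which generates
`⋀W`; this gives simplicity. In an arbitrary simple module `N`, a vacuum `v` defines the map
`u₁ ∧ ⋯ ∧ uₖ ↦ c⁻ᵏ u₁ ⋯ uₖ v` from `⋀W` to `N`, where `c = √2`. It intertwines the two actions, so
it is an isomorphism by Schur's lemma.
-/

section ExteriorAlgebra

variable {R M N : Type*} [CommRing R] [AddCommGroup M] [Module R M] [AddCommGroup N] [Module R N]

/-- Interior multiplication (contraction) of `⋀M` by a linear functional on `M`: Mathlib's
`CliffordAlgebra.contractLeft` for the zero quadratic form. -/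
def interiorProduct (d : Module.Dual R M) : Module.End R (ExteriorAlgebra R M) :=
  CliffordAlgebra.contractLeft (Q := (0 : QuadraticForm R M)) d

lemma interiorProduct_algebraMap (d : Module.Dual R M) (r : R) :
    interiorProduct d (algebraMap R _ r) = 0 :=
  CliffordAlgebra.contractLeft_algebraMap _ _ _

lemma interiorProduct_ι_mul (d : Module.Dual R M) (m : M) (x : ExteriorAlgebra R M) :
    interiorProduct d (ExteriorAlgebra.ι R m * x) =
      d m • x - ExteriorAlgebra.ι R m * interiorProduct d x :=
  CliffordAlgebra.contractLeft_ι_mul _ _ _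

@[elab_as_elim]
lemma exteriorAlgebra_left_induction {P : ExteriorAlgebra R M → Prop}
    (algebraMap : ∀ r, P (algebraMap R _ r)) (add : ∀ x y, P x → P y → P (x + y))
    (ι_mul : ∀ x m, P x → P (ExteriorAlgebra.ι R m * x)) (x : ExteriorAlgebra R M) : P x :=
  CliffordAlgebra.left_induction (0 : QuadraticForm R M) algebraMap add ι_mul x

lemma exteriorAlgebra_map_sub_smulRight (f : M →ₗ[R] N) (d : Module.Dual R M) (n : N)
    (x : ExteriorAlgebra R M) :
    ExteriorAlgebra.map (f - d.smulRight n) x =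
      ExteriorAlgebra.map f x -
        ExteriorAlgebra.ι R n * ExteriorAlgebra.map f (interiorProduct d x) := by
  induction x using exteriorAlgebra_left_induction with
  | algebraMap r => simp [AlgHom.commutes, interiorProduct_algebraMap]
  | add x y hx hy => simp only [map_add, hx, hy, mul_add]; abel
  | ι_mul x m hx =>
    have hswap : ExteriorAlgebra.ι R (f m) * ExteriorAlgebra.ι R n =
        -(ExteriorAlgebra.ι R n * ExteriorAlgebra.ι R (f m)) :=
      eq_neg_of_add_eq_zero_left (ExteriorAlgebra.ι_add_mul_swap (f m) n)
    simp only [interiorProduct_ι_mul, map_mul, ExteriorAlgebra.map_apply_ι, hx,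
      LinearMap.sub_apply, LinearMap.smulRight_apply, map_sub, map_smul, sub_mul, mul_sub,
      smul_mul_assoc, mul_smul_comm, ← mul_assoc, hswap, ExteriorAlgebra.ι_sq_zero, zero_mul,
      smul_zero, neg_mul]
    abel

lemma exteriorAlgebra_map_eq_map_of_interiorProduct_eq_zero [Module.Finite R M]
    [Module.Projective R M] {x : ExteriorAlgebra R M}
    (hx : ∀ d : Module.Dual R M, interiorProduct d x = 0) (f g : M →ₗ[R] N) :
    ExteriorAlgebra.map f x = ExteriorAlgebra.map g x := by
  obtain ⟨t, ht⟩ := dualTensorHom_bijective.surjective (f - g)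
  rw [← sub_sub_cancel f g, ← ht, eq_comm]
  clear ht
  induction t using TensorProduct.induction_on generalizing f with
  | zero => simp
  | tmul d n =>
    exact (exteriorAlgebra_map_sub_smulRight f d n x).trans
      (by rw [hx d, map_zero, mul_zero, sub_zero])
  | add s t hs ht => rw [map_add, ← sub_sub, ht, hs]

lemma eq_algebraMap_of_interiorProduct_eq_zero [Module.Finite R M] [Module.Projective R M]
    {x : ExteriorAlgebra R M} (hx : ∀ d : Module.Dual R M, interiorProduct d x = 0) :
    x = algebraMap R _ (ExteriorAlgebra.algebraMapInv x) := by
  have map_zero_eq : ExteriorAlgebra.map (0 : M →ₗ[R] M) =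
      (Algebra.ofId R _).comp ExteriorAlgebra.algebraMapInv := by
    ext m
    simp [ExteriorAlgebra.algebraMapInv]
  calc
    x = ExteriorAlgebra.map LinearMap.id x := by simp
    _ = ExteriorAlgebra.map 0 x := exteriorAlgebra_map_eq_map_of_interiorProduct_eq_zero hx _ _
    _ = algebraMap R _ (ExteriorAlgebra.algebraMapInv x) := congr($map_zero_eq x)

lemma finrank_exteriorAlgebra [Nontrivial R] [Module.Free R M] [Module.Finite R M] :
    Module.finrank R (ExteriorAlgebra R M) = 2 ^ Module.finrank R M := by
  simp [Module.finrank_eq_card_basis (Module.finBasis R M).ExteriorAlgebra]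

end ExteriorAlgebra

section Vacuum

variable {R L N : Type*} [CommRing R] [AddCommGroup L] [Module R L] [AddCommGroup N] [Module R N]

lemma apply_apply_eq_neg_of_forall_sq_eq_zero {A : L →ₗ[R] Module.End R N}
    (hA : ∀ w, A w * A w = 0) (w z : L) (x : N) : A w (A z x) = -A z (A w x) := by
  have hsum : A w * A z + A z * A w = 0 := by
    simpa [add_mul, mul_add, hA, add_comm] using hA (w + z)
  simpa using congr($(eq_neg_of_add_eq_zero_left hsum) x)

lemma exists_mem_ne_zero_forall_apply_eq_zero [Module.Finite R L] {A : L →ₗ[R] Module.End R N}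
    (hA : ∀ w, A w * A w = 0) {U : Submodule R N} (hAU : ∀ w, ∀ x ∈ U, A w x ∈ U) (hU : U ≠ ⊥) :
    ∃ v ∈ U, v ≠ 0 ∧ ∀ w, A w v = 0 := by
  classical
  suffices h : ∀ s : Finset L, ∃ v ∈ U, v ≠ 0 ∧ ∀ w ∈ s, A w v = 0 by
    obtain ⟨s, hs⟩ := Module.Finite.fg_top (R := R) (M := L)
    obtain ⟨v, hvU, hv, hvs⟩ := h s
    have hker : Submodule.span R (s : Set L) ≤ LinearMap.ker (A.flip v) :=
      Submodule.span_le.2 hvs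
    exact ⟨v, hvU, hv, fun w => hker (hs ▸ Submodule.mem_top)⟩
  intro s
  induction s using Finset.induction_on with
  | empty =>
    obtain ⟨v, hvU, hv⟩ := Submodule.exists_mem_ne_zero_of_ne_bot hU
    exact ⟨v, hvU, hv, by simp⟩
  | insert z s _ ih =>
    obtain ⟨v, hvU, hv, hvs⟩ := ih
    by_cases hz : A z v = 0
    · exact ⟨v, hvU, hv, Finset.forall_mem_insert _ _ _ |>.2 ⟨hz, hvs⟩⟩
    · refine ⟨A z v, hAU z v hvU, hz, Finset.forall_mem_insert _ _ _ |>.2 ⟨?_, fun w hw => ?_⟩⟩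
      · exact congr($(hA z) v)
      · rw [apply_apply_eq_neg_of_forall_sq_eq_zero hA, hvs w hw, map_zero, neg_zero]

end Vacuum

section Irreducible

variable {G K N : Type*} [Monoid G] [Field K] [AddCommGroup N] [Module K N]

lemma isIrreducible_iff_forall_submodule (ρ : Representation K G N) :
    ρ.IsIrreducible ↔ Nontrivial N ∧
      ∀ U : Submodule K N, (∀ a, ∀ x ∈ U, ρ a x ∈ U) → U = ⊥ ∨ U = ⊤ := by
  constructor
  · intro hρ
    refine ⟨not_subsingleton_iff_nontrivial.1 fun _ =>
      bot_ne_top (α := Subrepresentation ρ)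
        (Subrepresentation.toSubmodule_injective (Subsingleton.elim _ _)), fun U hU => ?_⟩
    exact (eq_bot_or_eq_top (⟨U, hU⟩ : Subrepresentation ρ)).imp
      (congrArg Subrepresentation.toSubmodule) (congrArg Subrepresentation.toSubmodule)
  · rintro ⟨_, hρ⟩
    exact
      { exists_pair_ne := ⟨⊥, ⊤, fun h =>
          bot_ne_top (α := Submodule K N) (congrArg Subrepresentation.toSubmodule h)⟩
        eq_bot_or_eq_top := fun U => (hρ U.toSubmodule U.apply_mem_toSubmodule).imp
          (Subrepresentation.toSubmodule_injective ·) (Subrepresentation.toSubmodule_injective ·) }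

end Irreducible

section Intertwining

variable {R V N N' : Type*} [CommRing R] [AddCommGroup V] [Module R V] [AddCommGroup N]
  [Module R N] [AddCommGroup N'] [Module R N'] {Q : QuadraticForm R V}

lemma apply_ι_apply_ι (ρ : CliffordAlgebra Q →ₐ[R] Module.End R N) (v w : V) (y : N) :
    ρ (CliffordAlgebra.ι Q v) (ρ (CliffordAlgebra.ι Q w) y) =
      QuadraticMap.polar Q v w • y - ρ (CliffordAlgebra.ι Q w) (ρ (CliffordAlgebra.ι Q v) y) := by
  rw [eq_sub_iff_add_eq]
  simpa using congr(ρ $(CliffordAlgebra.ι_mul_ι_add_swap v w) y)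

lemma forall_apply_eq_of_forall_ι {τ : CliffordAlgebra Q →ₐ[R] Module.End R N}
    {ρ : CliffordAlgebra Q →ₐ[R] Module.End R N'} {g : N →ₗ[R] N'}
    (hg : ∀ v x, g (τ (CliffordAlgebra.ι Q v) x) = ρ (CliffordAlgebra.ι Q v) (g x))
    (a : CliffordAlgebra Q) (x : N) : g (τ a x) = ρ a (g x) := by
  induction a using CliffordAlgebra.induction generalizing x with
  | algebraMap r => simp
  | ι v => exact hg v x
  | mul a b ha hb => simp [ha, hb]
  | add a b ha hb => simp [ha, hb]

end Intertwining

section Polarization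

variable {K V : Type*} [Field K] [AddCommGroup V] [Module K V]

/-- A polarization of the nondegenerate quadratic space `(V, Q)`: a pair of totally isotropic
subspaces spanning `V`. Nondegeneracy is that of the polar form, so that the notion is meaningful
in characteristic two as well. -/
structure IsPolarization (Q : QuadraticForm K V) (W W' : Submodule K V) : Prop where
  nondegenerate : Q.polarBilin.Nondegenerate
  sup_eq_top : W ⊔ W' = ⊤
  isotropic_left : ∀ u ∈ W, Q u = 0
  isotropic_right : ∀ w ∈ W', Q w = 0

/-- The Fock (spinor) representation of the Clifford algebra on `⋀W`, for a polarization
`V = W + W'`: vectors of `W` act by exterior multiplication and vectors of `W'` by contraction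
through the polar form. The scale `c` fixes the normalization of the two operators, on which the
Clifford relations impose only that the scalar factors be inverse to each other. -/
structure IsFockRepresentation {Q : QuadraticForm K V} {W : Submodule K V} (W' : Submodule K V)
    (c : K) (τ : CliffordAlgebra Q →ₐ[K] Module.End K (ExteriorAlgebra K W)) : Prop where
  scale_ne_zero : c ≠ 0
  creation (u : W) (x : ExteriorAlgebra K W) :
    τ (CliffordAlgebra.ι Q u) x = c • (ExteriorAlgebra.ι K u * x)
  annihilation (w : V) (hw : w ∈ W') (x : ExteriorAlgebra K W) :
    τ (CliffordAlgebra.ι Q w) x = c⁻¹ • interiorProduct (Q.polarBilin w ∘ₗ W.subtype) x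

variable {Q : QuadraticForm K V} {W W' : Submodule K V} {c : K} {N : Type*} [AddCommGroup N]
  [Module K N]

lemma IsPolarization.exists_polarBilin_eq [FiniteDimensional K V] (hQ : IsPolarization Q W W')
    (d : Module.Dual K W) : ∃ w ∈ W', Q.polarBilin w ∘ₗ W.subtype = d := by
  obtain ⟨D, rfl⟩ := LinearMap.exists_extend d
  obtain ⟨z, rfl⟩ := (LinearMap.BilinForm.toDual Q.polarBilin hQ.nondegenerate).surjective D
  obtain ⟨u, hu, w, hw, rfl⟩ := Submodule.mem_sup.1 (hQ.sup_eq_top ▸ Submodule.mem_top (x := z))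
  refine ⟨w, hw, LinearMap.ext fun u' => ?_⟩
  have hpolar : QuadraticMap.polar Q u u' = 0 := by
    simp [QuadraticMap.polar, hQ.isotropic_left _ (W.add_mem hu u'.2), hQ.isotropic_left u hu,
      hQ.isotropic_left u' u'.2]
  simp [LinearMap.BilinForm.toDual_def, hpolar]

lemma exists_vacuum [FiniteDimensional K W'] (hW' : ∀ w ∈ W', Q w = 0)
    (ρ : CliffordAlgebra Q →ₐ[K] Module.End K N) {U : Submodule K N}
    (hρU : ∀ a, ∀ x ∈ U, ρ a x ∈ U) (hU : U ≠ ⊥) :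
    ∃ v ∈ U, v ≠ 0 ∧ ∀ w ∈ W', ρ (CliffordAlgebra.ι Q w) v = 0 := by
  let A : W' →ₗ[K] Module.End K N := ρ.toLinearMap ∘ₗ CliffordAlgebra.ι Q ∘ₗ W'.subtype
  have hA (w : W') : A w * A w = 0 := by
    simp [A, ← map_mul, hW' w w.2]
  obtain ⟨v, hvU, hv, hAv⟩ :=
    exists_mem_ne_zero_forall_apply_eq_zero hA (fun w => hρU (CliffordAlgebra.ι Q w)) hU
  exact ⟨v, hvU, hv, fun w hw => hAv ⟨w, hw⟩⟩

namespace IsFockRepresentation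

variable {τ : CliffordAlgebra Q →ₐ[K] Module.End K (ExteriorAlgebra K W)}

lemma eq_top_of_one_mem (hτ : IsFockRepresentation W' c τ) {U : Submodule K (ExteriorAlgebra K W)}
    (hτU : ∀ a, ∀ x ∈ U, τ a x ∈ U) (hone : 1 ∈ U) : U = ⊤ := by
  rw [Submodule.eq_top_iff']
  intro x
  induction x using exteriorAlgebra_left_induction with
  | algebraMap r => simpa [Algebra.algebraMap_eq_smul_one] using U.smul_mem r hone
  | add x y hx hy => exact U.add_mem hx hy
  | ι_mul x u hx =>
    have hux := hτU (CliffordAlgebra.ι Q u) x hx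
    rwa [hτ.creation, U.smul_mem_iff hτ.scale_ne_zero] at hux

lemma eq_algebraMap_of_vacuum [FiniteDimensional K V] (hQ : IsPolarization Q W W')
    (hτ : IsFockRepresentation W' c τ) {x : ExteriorAlgebra K W}
    (hx : ∀ w ∈ W', τ (CliffordAlgebra.ι Q w) x = 0) :
    x = algebraMap K _ (ExteriorAlgebra.algebraMapInv x) := by
  refine eq_algebraMap_of_interiorProduct_eq_zero fun d => ?_
  obtain ⟨w, hw, rfl⟩ := hQ.exists_polarBilin_eq d
  simpa [hτ.annihilation w hw, hτ.scale_ne_zero] using hx w hw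

theorem isIrreducible [FiniteDimensional K V]
    (hQ : IsPolarization Q W W') (hτ : IsFockRepresentation W' c τ) :
    Representation.IsIrreducible (τ : CliffordAlgebra Q →* Module.End K (ExteriorAlgebra K W)) := by
  refine (isIrreducible_iff_forall_submodule _).2 ⟨inferInstance, fun U hτU => ?_⟩
  refine or_iff_not_imp_left.2 fun hU => hτ.eq_top_of_one_mem hτU ?_
  obtain ⟨v, hvU, hv, hvac⟩ := exists_vacuum hQ.isotropic_right τ hτU hU
  obtain ⟨r, rfl⟩ : ∃ r, v = algebraMap K _ r := ⟨_, hτ.eq_algebraMap_of_vacuum hQ hvac⟩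
  rw [Algebra.algebraMap_eq_smul_one] at hv hvU
  exact (U.smul_mem_iff (left_ne_zero_of_smul hv)).1 hvU

end IsFockRepresentation

/-- The map `u₁ ∧ ⋯ ∧ uₖ ↦ c⁻ᵏ u₁ ⋯ uₖ v` from the exterior algebra of a totally isotropic
subspace `W` to a Clifford module containing `v`. -/
def vacuumMap (hW : ∀ u ∈ W, Q u = 0) (c : K) (ρ : CliffordAlgebra Q →ₐ[K] Module.End K N)
    (v : N) : ExteriorAlgebra K W →ₗ[K] N :=
  LinearMap.applyₗ v ∘ₗ (ExteriorAlgebra.lift K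
    ⟨c⁻¹ • (ρ.toLinearMap ∘ₗ CliffordAlgebra.ι Q ∘ₗ W.subtype), fun u => by
      simp [← map_mul, hW u u.2]⟩).toLinearMap

section VacuumMap

variable (hW : ∀ u ∈ W, Q u = 0) (ρ : CliffordAlgebra Q →ₐ[K] Module.End K N) (v : N)

lemma vacuumMap_algebraMap (r : K) : vacuumMap hW c ρ v (algebraMap K _ r) = r • v := by
  simp [vacuumMap]

lemma vacuumMap_ι_mul (u : W) (x : ExteriorAlgebra K W) :
    vacuumMap hW c ρ v (ExteriorAlgebra.ι K u * x) =
      c⁻¹ • ρ (CliffordAlgebra.ι Q u) (vacuumMap hW c ρ v x) := by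
  simp [vacuumMap]

lemma vacuumMap_interiorProduct {v : N} {w : V} (hw : ρ (CliffordAlgebra.ι Q w) v = 0)
    (x : ExteriorAlgebra K W) :
    c⁻¹ • vacuumMap hW c ρ v (interiorProduct (Q.polarBilin w ∘ₗ W.subtype) x) =
      ρ (CliffordAlgebra.ι Q w) (vacuumMap hW c ρ v x) := by
  induction x using exteriorAlgebra_left_induction with
  | algebraMap r => simp [interiorProduct_algebraMap, vacuumMap_algebraMap, hw]
  | add x y hx hy => simp only [map_add, smul_add, hx, hy]
  | ι_mul x u hx =>
    rw [interiorProduct_ι_mul, vacuumMap_ι_mul, map_sub, map_smul, vacuumMap_ι_mul, map_smul,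
      apply_ι_apply_ι, ← hx, map_smul, smul_sub, smul_sub]
    rfl

lemma IsFockRepresentation.vacuumMap_apply
    {τ : CliffordAlgebra Q →ₐ[K] Module.End K (ExteriorAlgebra K W)}
    (hτ : IsFockRepresentation W' c τ) (hsup : W ⊔ W' = ⊤) {v : N}
    (hv : ∀ w ∈ W', ρ (CliffordAlgebra.ι Q w) v = 0) (a : CliffordAlgebra Q)
    (x : ExteriorAlgebra K W) :
    vacuumMap hW c ρ v (τ a x) = ρ a (vacuumMap hW c ρ v x) := by
  refine forall_apply_eq_of_forall_ι (fun z x => ?_) a x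
  obtain ⟨u, hu, w, hw, rfl⟩ := Submodule.mem_sup.1 (hsup ▸ Submodule.mem_top (x := z))
  have hcreation : vacuumMap hW c ρ v (τ (CliffordAlgebra.ι Q u) x) =
      ρ (CliffordAlgebra.ι Q u) (vacuumMap hW c ρ v x) := by
    rw [hτ.creation ⟨u, hu⟩, map_smul, vacuumMap_ι_mul, smul_inv_smul₀ hτ.scale_ne_zero]
  have hannihilation : vacuumMap hW c ρ v (τ (CliffordAlgebra.ι Q w) x) =
      ρ (CliffordAlgebra.ι Q w) (vacuumMap hW c ρ v x) := by
    rw [hτ.annihilation w hw, map_smul, vacuumMap_interiorProduct hW ρ (hv w hw)]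
  simp only [map_add, LinearMap.add_apply, hcreation, hannihilation]

end VacuumMap

theorem IsFockRepresentation.nonempty_equiv [FiniteDimensional K V]
    {τ : CliffordAlgebra Q →ₐ[K] Module.End K (ExteriorAlgebra K W)}
    (hQ : IsPolarization Q W W') (hτ : IsFockRepresentation W' c τ)
    (ρ : CliffordAlgebra Q →ₐ[K] Module.End K N)
    (hρ : Representation.IsIrreducible (ρ : CliffordAlgebra Q →* Module.End K N)) :
    Nonempty (Representation.Equiv (τ : CliffordAlgebra Q →* Module.End K (ExteriorAlgebra K W))
      (ρ : CliffordAlgebra Q →* Module.End K N)) := by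
  have := hτ.isIrreducible hQ
  have := ((isIrreducible_iff_forall_submodule _).1 hρ).1
  obtain ⟨v, -, hv, hvac⟩ := exists_vacuum hQ.isotropic_right ρ
    (fun _ _ _ => Submodule.mem_top) top_ne_bot
  let g := (vacuumMap hQ.isotropic_left c ρ v).intertwiningMap_of_isIntertwiningMap
    (τ : CliffordAlgebra Q →* Module.End K (ExteriorAlgebra K W))
    (ρ : CliffordAlgebra Q →* Module.End K N)
    (hτ.vacuumMap_apply hQ.isotropic_left ρ hQ.sup_eq_top hvac)
  have g_one : g (algebraMap K _ 1) = v :=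
    (vacuumMap_algebraMap hQ.isotropic_left ρ v 1).trans (one_smul K v)
  have hg : g ≠ 0 := fun h => hv (g_one.symm.trans congr($h (algebraMap K _ 1)))
  exact ⟨g.ofBijective ((Representation.IsIrreducible.bijective_or_eq_zero g).resolve_right hg)⟩

theorem spinor_module_simple_unique_general [FiniteDimensional K V]
    {τ : CliffordAlgebra Q →ₐ[K] Module.End K (ExteriorAlgebra K W)}
    (hQ : IsPolarization Q W W') (hτ : IsFockRepresentation W' c τ) :
    Nontrivial (ExteriorAlgebra K W) ∧
    (∀ U : Submodule K (ExteriorAlgebra K W), (∀ a, ∀ x ∈ U, τ a x ∈ U) → U = ⊥ ∨ U = ⊤) ∧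
    Module.finrank K (ExteriorAlgebra K W) = 2 ^ Module.finrank K W ∧
    ∀ (N : Type*) [AddCommGroup N] [Module K N] (ρ : CliffordAlgebra Q →ₐ[K] Module.End K N),
      Nontrivial N →
      (∀ U : Submodule K N, (∀ a, ∀ x ∈ U, ρ a x ∈ U) → U = ⊥ ∨ U = ⊤) →
      ∃ g : ExteriorAlgebra K W ≃ₗ[K] N, ∀ a x, g (τ a x) = ρ a (g x) := by
  obtain ⟨hnontrivial, hsimple⟩ :=
    (isIrreducible_iff_forall_submodule _).1 (hτ.isIrreducible hQ)
  refine ⟨hnontrivial, hsimple, finrank_exteriorAlgebra, fun N _ _ ρ hN hU => ?_⟩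
  obtain ⟨g⟩ := hτ.nonempty_equiv hQ ρ ((isIrreducible_iff_forall_submodule _).2 ⟨hN, hU⟩)
  exact ⟨g.toLinearEquiv, g.toIntertwiningMap.isIntertwining⟩

end Polarization

section Span

variable {R V ι : Type*} [CommRing R] [AddCommGroup V] [Module R V]

lemma eq_zero_of_mem_span_range {Q : QuadraticForm R V} {f : ι → V} (hf : ∀ j, Q (f j) = 0)
    (hpolar : ∀ j k, QuadraticMap.polar Q (f j) (f k) = 0) {x : V}
    (hx : x ∈ Submodule.span R (Set.range f)) : Q x = 0 := by
  have hpolar_span : ∀ y ∈ Submodule.span R (Set.range f),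
      ∀ z ∈ Submodule.span R (Set.range f), Q.polarBilin y z = 0 := by
    intro y hy z hz
    induction hy, hz using Submodule.span_induction₂ with
    | mem_mem y z hy hz =>
      obtain ⟨⟨j, rfl⟩, ⟨k, rfl⟩⟩ := And.intro hy hz
      exact hpolar j k
    | _ => simp_all
  induction hx using Submodule.span_induction with
  | mem x hx =>
    obtain ⟨j, rfl⟩ := hx
    exact hf j
  | zero => exact QuadraticMap.map_zero Q
  | add x y hx hy hQx hQy =>
    rw [QuadraticMap.map_add Q, hQx, hQy, ← Q.polarBilin_apply_apply, hpolar_span x hx y hy]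
    simp
  | smul a x _ hQx => rw [QuadraticMap.map_smul, hQx, smul_zero]

end Span

section Standard

lemma pairingLin_apply (n : ℕ) (v z : Fin n → ℂ) : pairingLin n v z = v ⬝ᵥ z := by
  simp [pairingLin, dotProduct]

lemma Qc_apply (n : ℕ) (x : Fin n → ℂ) : Qc n x = -(x ⬝ᵥ x) := by
  simp [Qc, QuadraticMap.weightedSumSquares_apply, dotProduct]

lemma polar_Qc (n : ℕ) (x y : Fin n → ℂ) :
    QuadraticMap.polar (Qc n) x y = -2 * (x ⬝ᵥ y) := by
  simp only [QuadraticMap.polar, Qc_apply, add_dotProduct, dotProduct_add, dotProduct_comm y x]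
  ring

lemma nondegenerate_polarBilin_Qc (n : ℕ) : (Qc n).polarBilin.Nondegenerate := by
  constructor <;> intro x hx <;> refine dotProduct_eq_zero x fun y => ?_
  · simpa [polar_Qc] using hx y
  · simpa [polar_Qc, dotProduct_comm] using hx y

lemma ofReal_sqrt_two_ne_zero : (Real.sqrt 2 : ℂ) ≠ 0 :=
  Complex.ofReal_ne_zero.2 (by positivity)

lemma ofReal_sqrt_two_mul_self : (Real.sqrt 2 : ℂ) * Real.sqrt 2 = 2 := by
  rw [← Complex.ofReal_mul, Real.mul_self_sqrt zero_le_two, Complex.ofReal_ofNat]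

lemma inv_ofReal_sqrt_two_mul_self : (Real.sqrt 2 : ℂ)⁻¹ * (Real.sqrt 2 : ℂ)⁻¹ = 2⁻¹ := by
  rw [← mul_inv, ofReal_sqrt_two_mul_self]

variable {m n : ℕ}

lemma fvec_eq (n j : ℕ) : fvec n j =
    (Real.sqrt 2 : ℂ)⁻¹ • evec n (2 * j) + (I * (Real.sqrt 2 : ℂ)⁻¹) • evec n (2 * j + 1) := by
  ext i
  simp only [fvec, evec, Pi.add_apply, Pi.smul_apply, smul_eq_mul]
  split_ifs <;> first | omega | simp

lemma fbarvec_eq (n j : ℕ) : fbarvec n j =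
    -(Real.sqrt 2 : ℂ)⁻¹ • evec n (2 * j) + (I * (Real.sqrt 2 : ℂ)⁻¹) • evec n (2 * j + 1) := by
  ext i
  simp only [fbarvec, evec, Pi.add_apply, Pi.smul_apply, smul_eq_mul]
  split_ifs <;> first | omega | simp

lemma evec_two_mul (n j : ℕ) :
    evec n (2 * j) = (Real.sqrt 2 : ℂ)⁻¹ • (fvec n j - fbarvec n j) := by
  rw [fvec_eq, fbarvec_eq]
  match_scalars
  · linear_combination -2 * inv_ofReal_sqrt_two_mul_self
  · ring

lemma evec_two_mul_add_one (n j : ℕ) :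
    evec n (2 * j + 1) = (-I * (Real.sqrt 2 : ℂ)⁻¹) • (fvec n j + fbarvec n j) := by
  rw [fvec_eq, fbarvec_eq]
  match_scalars
  · linear_combination 2 * I ^ 2 * inv_ofReal_sqrt_two_mul_self + I_sq
  · ring

lemma evec_dotProduct_evec {i : ℕ} (hi : i < n) (j : ℕ) :
    evec n i ⬝ᵥ evec n j = if i = j then 1 else 0 := by
  have evec_eq_single : evec n i = Pi.single ⟨i, hi⟩ 1 := by
    ext k
    simp [evec, Pi.single_apply, Fin.ext_iff]
  rw [evec_eq_single, single_one_dotProduct, evec]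

lemma evec_combination_dotProduct {j : ℕ} (hj : 2 * j + 1 < n) (k : ℕ) (a b a' b' : ℂ) :
    (a • evec n (2 * j) + b • evec n (2 * j + 1)) ⬝ᵥ
      (a' • evec n (2 * k) + b' • evec n (2 * k + 1)) = if j = k then a * a' + b * b' else 0 := by
  simp only [add_dotProduct, dotProduct_add, smul_dotProduct, dotProduct_smul,
    evec_dotProduct_evec hj, evec_dotProduct_evec (Nat.lt_of_succ_lt hj), smul_eq_mul]
  split_ifs <;> first | omega | ring

lemma fvec_dotProduct_fvec {j : ℕ} (hj : 2 * j + 1 < n) (k : ℕ) : fvec n j ⬝ᵥ fvec n k = 0 := by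
  rw [fvec_eq, fvec_eq, evec_combination_dotProduct hj, ite_eq_right_iff]
  intro _
  linear_combination (Real.sqrt 2 : ℂ)⁻¹ ^ 2 * I_sq

lemma fbarvec_dotProduct_fbarvec {j : ℕ} (hj : 2 * j + 1 < n) (k : ℕ) :
    fbarvec n j ⬝ᵥ fbarvec n k = 0 := by
  rw [fbarvec_eq, fbarvec_eq, evec_combination_dotProduct hj, ite_eq_right_iff]
  intro _
  linear_combination (Real.sqrt 2 : ℂ)⁻¹ ^ 2 * I_sq

lemma Qc_eq_zero_of_mem_Wsub (h : 2 * m ≤ n) : ∀ u ∈ Wsub n m, Qc n u = 0 := by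
  have hdot (j k : Fin m) : fvec n j ⬝ᵥ fvec n k = 0 := fvec_dotProduct_fvec (by omega) k
  exact fun u => eq_zero_of_mem_span_range (fun j => by rw [Qc_apply, hdot, neg_zero])
    (fun j k => by rw [polar_Qc, hdot, mul_zero])

lemma Qc_eq_zero_of_mem_Wbarsub (h : 2 * m ≤ n) : ∀ w ∈ Wbarsub n m, Qc n w = 0 := by
  have hdot (j k : Fin m) : fbarvec n j ⬝ᵥ fbarvec n k = 0 :=
    fbarvec_dotProduct_fbarvec (by omega) k
  exact fun w => eq_zero_of_mem_span_range (fun j => by rw [Qc_apply, hdot, neg_zero])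
    (fun j k => by rw [polar_Qc, hdot, mul_zero])

lemma Wsub_sup_Wbarsub (m : ℕ) : Wsub (2 * m) m ⊔ Wbarsub (2 * m) m = ⊤ := by
  rw [eq_top_iff, ← (Pi.basisFun ℂ (Fin (2 * m))).span_eq, Submodule.span_le]
  rintro _ ⟨i, rfl⟩
  have hsingle : Pi.basisFun ℂ (Fin (2 * m)) i = evec (2 * m) i := by
    ext k
    simp [evec, Pi.single_apply, Fin.ext_iff]
  obtain ⟨j, hj⟩ : ∃ j : Fin m, (i : ℕ) = 2 * j ∨ (i : ℕ) = 2 * j + 1 :=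
    ⟨⟨i / 2, by omega⟩, by simp only; omega⟩
  have hf : fvec (2 * m) j ∈ Wsub (2 * m) m ⊔ Wbarsub (2 * m) m :=
    Submodule.mem_sup_left (Submodule.subset_span ⟨j, rfl⟩)
  have hfbar : fbarvec (2 * m) j ∈ Wsub (2 * m) m ⊔ Wbarsub (2 * m) m :=
    Submodule.mem_sup_right (Submodule.subset_span ⟨j, rfl⟩)
  rw [SetLike.mem_coe, hsingle]
  rcases hj with hj | hj <;> rw [hj]
  · rw [evec_two_mul]
    exact Submodule.smul_mem _ _ (Submodule.sub_mem _ hf hfbar)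
  · rw [evec_two_mul_add_one]
    exact Submodule.smul_mem _ _ (Submodule.add_mem _ hf hfbar)

theorem isPolarization_Wsub_Wbarsub (m : ℕ) :
    IsPolarization (Qc (2 * m)) (Wsub (2 * m) m) (Wbarsub (2 * m) m) where
  nondegenerate := nondegenerate_polarBilin_Qc _
  sup_eq_top := Wsub_sup_Wbarsub m
  isotropic_left := Qc_eq_zero_of_mem_Wsub le_rfl
  isotropic_right := Qc_eq_zero_of_mem_Wbarsub le_rfl

lemma finrank_Wsub (m : ℕ) : Module.finrank ℂ (Wsub (2 * m) m) = m := by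
  have hW : Module.finrank ℂ (Wsub (2 * m) m) ≤ m :=
    (finrank_range_le_card _).trans_eq (Fintype.card_fin m)
  have hWbar : Module.finrank ℂ (Wbarsub (2 * m) m) ≤ m :=
    (finrank_range_le_card _).trans_eq (Fintype.card_fin m)
  have hsum := Submodule.finrank_add_le_finrank_add_finrank (Wsub (2 * m) m) (Wbarsub (2 * m) m)
  rw [Wsub_sup_Wbarsub, finrank_top, Module.finrank_fin_fun] at hsum
  omega

lemma interiorProduct_polarBilin_Qc (w : Fin n → ℂ) :
    interiorProduct ((Qc n).polarBilin w ∘ₗ (Wsub n m).subtype) = (-2 : ℂ) • intMul n m w := by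
  have hfunctional : (Qc n).polarBilin w ∘ₗ (Wsub n m).subtype =
      (-2 : ℂ) • (pairingLin n w ∘ₗ (Wsub n m).subtype) := by
    ext u
    simp [polar_Qc, pairingLin_apply]
  rw [hfunctional, interiorProduct, map_smul]
  rfl

theorem isFockRepresentation_sqrt_two
    {τ : CliffordAlgebra (Qc n) →ₐ[ℂ] Module.End ℂ (Spinor n m)}
    (hτ : ∀ (u : Wsub n m) (v : Wbarsub n m) (x : Spinor n m),
      τ (CliffordAlgebra.ι (Qc n) ((u : Fin n → ℂ) + (v : Fin n → ℂ))) x =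
        (Real.sqrt 2 : ℂ) • (ExteriorAlgebra.ι ℂ u * x) -
          (Real.sqrt 2 : ℂ) • intMul n m (v : Fin n → ℂ) x) :
    IsFockRepresentation (Wbarsub n m) (Real.sqrt 2 : ℂ) τ where
  scale_ne_zero := ofReal_sqrt_two_ne_zero
  creation u x := by
    simpa [intMul, pairingLin] using hτ u 0 x
  annihilation w hw x := by
    have hscale : (Real.sqrt 2 : ℂ)⁻¹ * -2 = -Real.sqrt 2 := by
      rw [inv_mul_eq_iff_eq_mul₀ ofReal_sqrt_two_ne_zero, mul_neg, ofReal_sqrt_two_mul_self]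
    rw [interiorProduct_polarBilin_Qc, LinearMap.smul_apply, smul_smul, hscale, neg_smul]
    simpa using hτ 0 ⟨w, hw⟩ x

end Standard

/-- Let `n = 2m`. The Dirac spinor space `𝕊_{2m} = ⋀W_m`, with the module
structure `τ(u + v̄) = √2 ε(u) − √2 ι(v̄)`, is a simple `ℂCl(2m)`-module of complex
dimension `2^m`; moreover every simple `ℂCl(2m)`-module is isomorphic to `𝕊_{2m}`, i.e. up
to equivalence `τ` is the unique irreducible representation of `ℂCl(2m)`. -/
theorem spinor_module_simple_unique (m : ℕ)
    (τ : CliffordAlgebra (Qc (2 * m)) →ₐ[ℂ] Module.End ℂ (Spinor (2 * m) m))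
    (hτ : ∀ (u : Wsub (2 * m) m) (v : Wbarsub (2 * m) m) (x : Spinor (2 * m) m),
        τ (CliffordAlgebra.ι (Qc (2 * m))
            ((u : Fin (2 * m) → ℂ) + (v : Fin (2 * m) → ℂ))) x =
          (Real.sqrt 2 : ℂ) • (ExteriorAlgebra.ι ℂ u * x) -
            (Real.sqrt 2 : ℂ) • intMul (2 * m) m (v : Fin (2 * m) → ℂ) x) :
    -- `𝕊_{2m}` is a simple `ℂCl(2m)`-module …
    Nontrivial (Spinor (2 * m) m) ∧
    (∀ U : Submodule ℂ (Spinor (2 * m) m),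
        (∀ a : CliffordAlgebra (Qc (2 * m)), ∀ x ∈ U, τ a x ∈ U) → U = ⊥ ∨ U = ⊤) ∧
    -- … of complex dimension `2^m`
    Module.finrank ℂ (Spinor (2 * m) m) = 2 ^ m ∧
    -- every simple `ℂCl(2m)`-module is isomorphic to `𝕊_{2m}`
    (∀ (N : Type) (_ : AddCommGroup N), ∀ (_ : Module ℂ N),
      ∀ ρ : CliffordAlgebra (Qc (2 * m)) →ₐ[ℂ] Module.End ℂ N,
        Nontrivial N →
        (∀ U : Submodule ℂ N,
            (∀ a : CliffordAlgebra (Qc (2 * m)), ∀ x ∈ U, ρ a x ∈ U) → U = ⊥ ∨ U = ⊤) →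
        ∃ g : Spinor (2 * m) m ≃ₗ[ℂ] N,
          ∀ (a : CliffordAlgebra (Qc (2 * m))) (x : Spinor (2 * m) m),
            g (τ a x) = ρ a (g x)) := by
  simpa only [finrank_Wsub] using spinor_module_simple_unique_general
    (isPolarization_Wsub_Wbarsub m) (isFockRepresentation_sqrt_two hτ)
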